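/- arXiv:2602.08003 — 2 statements merged into one kernel-verified Lean document; each statement's English description precedes it below -/
import Mathlib

section
/- Let Y and X₁,…,X_m be {−1,+1}-valued random variables on a common probability space with arbitrary joint distribution, and let E_j = 1 if X_j ≠ Y and E_j = 0 otherwise. For any subset S ⊆ {1,…,m} and any j ∉ S, the marginal information gain Δ(j|S) := I(Y; X_j | X_S) satisfies the decomposition Δ(j|S) = I(Y; X_j) − I(X_j; X_S) + I(E_j; E_S) + Λ_j(S), where Λ_j(S) := I(E_j; Y | E_S) − I(E_j; Y). -/
open MeasureTheory ProbabilityTheory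

/-- Shannon entropy (in nats) of a discrete random variable `X`:
`H(X) = ∑ₐ -P(X = a) log P(X = a)`, with the convention `0 log 0 = 0`. -/
noncomputable def shannonEntropy {Ω : Type*} [MeasureSpace Ω] {A : Type*}
    (X : Ω → A) : ℝ :=
  ∑' a : A, Real.negMulLog ((ℙ {ω | X ω = a}).toReal)

/-- Shannon mutual information of discrete random variables:
`I(X;Y) = H(X) + H(Y) - H(X,Y)`. -/
noncomputable def mutualInfo {Ω : Type*} [MeasureSpace Ω] {A B : Type*}
    (X : Ω → A) (Y : Ω → B) : ℝ :=
  shannonEntropy X + shannonEntropy Y - shannonEntropy (fun ω => (X ω, Y ω))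

/-- Conditional mutual information of discrete random variables:
`I(X;Y|Z) = H(X,Z) + H(Y,Z) - H(X,Y,Z) - H(Z)`. -/
noncomputable def condMutualInfo {Ω : Type*} [MeasureSpace Ω] {A B C : Type*}
    (X : Ω → A) (Y : Ω → B) (Z : Ω → C) : ℝ :=
  shannonEntropy (fun ω => (X ω, Z ω)) + shannonEntropy (fun ω => (Y ω, Z ω))
    - shannonEntropy (fun ω => (X ω, Y ω, Z ω)) - shannonEntropy Z

/-- Conditional entropy of discrete random variables: `H(X|Z) = H(X,Z) - H(Z)`. -/
noncomputable def condEntropy {Ω : Type*} [MeasureSpace Ω] {A C : Type*}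
    (X : Ω → A) (Z : Ω → C) : ℝ :=
  shannonEntropy (fun ω => (X ω, Z ω)) - shannonEntropy Z

/-- The error indicator of a prediction `X` against the label `Y`:
`E = 1` if `X ≠ Y` and `E = 0` otherwise. -/
def errInd {Ω : Type*} (Y X : Ω → ℤ) (ω : Ω) : ℕ :=
  if X ω ≠ Y ω then 1 else 0

theorem shannonEntropy_eq_ker {Ω : Type*} [MeasureSpace Ω] {A : Type*} (X : Ω → A) :
    shannonEntropy X = shannonEntropy (fun ω => (Quotient.mk (Setoid.ker X) ω)) := by
  unfold shannonEntropy
  rw [← Function.Injective.tsum_eq (Setoid.kerLift_injective X)]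
  · refine tsum_congr fun q => ?_
    induction q using Quotient.inductionOn with
    | _ a =>
    congr 3
    ext ω
    simp only [Set.mem_setOf_eq]
    rw [Quotient.eq]
    exact Iff.rfl
  · intro a ha
    by_contra hne
    apply ha
    have : {ω | X ω = a} = ∅ := by
      ext ω
      simp only [Set.mem_setOf_eq, Set.mem_empty_iff_false, iff_false]
      intro h
      exact hne ⟨Quotient.mk _ ω, h⟩
    simp [this]

theorem shannonEntropy_congr {Ω : Type*} [MeasureSpace Ω] {A B : Type*}
    (X : Ω → A) (Z : Ω → B) (h : ∀ ω ω', X ω = X ω' ↔ Z ω = Z ω') :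
    shannonEntropy X = shannonEntropy Z := by
  rw [shannonEntropy_eq_ker X, shannonEntropy_eq_ker Z]
  have : Setoid.ker X = Setoid.ker Z := Setoid.ext h
  rw [this]

theorem errInd_eq_iff {Ω : Type*} {Y X : Ω → ℤ}
    (hY : ∀ ω, Y ω = 1 ∨ Y ω = -1) (hX : ∀ ω, X ω = 1 ∨ X ω = -1) {ω ω' : Ω}
    (h : Y ω = Y ω') : errInd Y X ω = errInd Y X ω' ↔ X ω = X ω' := by
  unfold errInd
  rw [← h]
  rcases hY ω with h1 | h1 <;> rcases hX ω with h2 | h2 <;> rcases hX ω' with h3 | h3 <;>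
    simp [h1, h2, h3]

/-- **Accuracy–Redundancy–Error decomposition.**
Let `Y` and `X₁,…,X_m` be `{-1,+1}`-valued random variables with arbitrary joint law and
error indicators `E_j = 1{X_j ≠ Y}`.  For any `S ⊆ {1,…,m}` and `j ∉ S`, the marginal
information gain `Δ(j|S) = I(Y; X_j | X_S)` decomposes as
`Δ(j|S) = I(Y;X_j) - I(X_j;X_S) + I(E_j;E_S) + Λ_j(S)` with
`Λ_j(S) = I(E_j;Y|E_S) - I(E_j;Y)`. -/
theorem marginal_gain_decomposition
    {Ω : Type*} [MeasureSpace Ω] [IsProbabilityMeasure (ℙ : Measure Ω)]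
    {m : ℕ} (Y : Ω → ℤ) (X : Fin m → Ω → ℤ)
    (hYm : Measurable Y) (hXm : ∀ j, Measurable (X j))
    (hYval : ∀ ω, Y ω = 1 ∨ Y ω = -1)
    (hXval : ∀ j ω, X j ω = 1 ∨ X j ω = -1)
    (S : Finset (Fin m)) (j : Fin m) (hj : j ∉ S) :
    condMutualInfo Y (X j) (fun ω => fun i : {i : Fin m // i ∈ S} => X i.1 ω)
      = mutualInfo Y (X j)
        - mutualInfo (X j) (fun ω => fun i : {i : Fin m // i ∈ S} => X i.1 ω)
        + mutualInfo (errInd Y (X j))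
            (fun ω => fun i : {i : Fin m // i ∈ S} => errInd Y (X i.1) ω)
        + (condMutualInfo (errInd Y (X j)) Y
              (fun ω => fun i : {i : Fin m // i ∈ S} => errInd Y (X i.1) ω)
            - mutualInfo (errInd Y (X j)) Y) := by
  have h1 : shannonEntropy (fun ω => (Y ω, fun i : {i : Fin m // i ∈ S} => X i.1 ω))
      = shannonEntropy (fun ω => (Y ω, fun i : {i : Fin m // i ∈ S} => errInd Y (X i.1) ω)) := by
    apply shannonEntropy_congr
    intro ω ω'
    simp only [Prod.mk.injEq, funext_iff]
    refine and_congr_right fun h => forall_congr' fun i => ?_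
    exact (errInd_eq_iff hYval (hXval i.1) h).symm
  have h2 : shannonEntropy (fun ω => (Y ω, X j ω))
      = shannonEntropy (fun ω => (errInd Y (X j) ω, Y ω)) := by
    apply shannonEntropy_congr
    intro ω ω'
    simp only [Prod.mk.injEq]
    rw [and_comm (b := Y ω = Y ω')]
    exact and_congr_right fun h => (errInd_eq_iff hYval (hXval j) h).symm
  have h3 : shannonEntropy (fun ω => (Y ω, X j ω, fun i : {i : Fin m // i ∈ S} => X i.1 ω))
      = shannonEntropy (fun ω => (errInd Y (X j) ω, Y ω,
          fun i : {i : Fin m // i ∈ S} => errInd Y (X i.1) ω)) := by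
    apply shannonEntropy_congr
    intro ω ω'
    simp only [Prod.mk.injEq, funext_iff]
    rw [and_left_comm (b := Y ω = Y ω')]
    refine and_congr_right fun h => and_congr ?_ (forall_congr' fun i => ?_)
    · exact (errInd_eq_iff hYval (hXval j) h).symm
    · exact (errInd_eq_iff hYval (hXval i.1) h).symm
  unfold condMutualInfo mutualInfo
  rw [h1, h2, h3]
  ring
end

section
/- Let Y, D, and X₁,…,X_m be random variables with finite ranges on a common probability space such that for every subset S ⊆ {1,…,m} the variables (X_j)_{j∈S} are conditionally independent given (Y, D), i.e., P(X_S | Y, D) = ∏_{j∈S} P(X_j | Y, D). Then the set function F(S) = I(Y; X_S | D) is submodular: for all subsets S ⊆ T ⊆ {1,…,m} and every j ∉ T, F(S ∪ {j}) − F(S) ≥ F(T ∪ {j}) − F(T). -/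
open MeasureTheory ProbabilityTheory

section Helpers

open Real Finset

lemma aux_expand {α β : Type*} [Fintype α] [Fintype β] (q : α → β → ℝ) :
    (∑ w, negMulLog (∑ u, q w u)) + (∑ u, negMulLog (∑ w, q w u))
      - (∑ w, ∑ u, negMulLog (q w u)) - negMulLog (∑ w, ∑ u, q w u)
    = ∑ w, ∑ u, q w u * (log (q w u) + log (∑ w, ∑ u, q w u) - log (∑ u, q w u)
        - log (∑ w, q w u)) := by
  have h1 : (∑ w, negMulLog (∑ u, q w u)) = ∑ w, ∑ u, - (q w u * log (∑ u, q w u)) := by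
    refine Finset.sum_congr rfl fun w _ => ?_
    rw [negMulLog, Finset.sum_neg_distrib, ← Finset.sum_mul]; ring
  have h2 : (∑ u, negMulLog (∑ w, q w u)) = ∑ w, ∑ u, - (q w u * log (∑ w, q w u)) := by
    rw [Finset.sum_comm]
    refine Finset.sum_congr rfl fun w _ => ?_
    rw [negMulLog, Finset.sum_neg_distrib, ← Finset.sum_mul]; ring
  have h3 : negMulLog (∑ w, ∑ u, q w u)
      = ∑ w, ∑ u, - (q w u * log (∑ w, ∑ u, q w u)) := by
    simp only [Finset.sum_neg_distrib, ← Finset.sum_mul]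
    rw [negMulLog]; ring
  rw [h1, h2, h3]
  simp only [← Finset.sum_add_distrib, ← Finset.sum_sub_distrib]
  refine Finset.sum_congr rfl fun w _ => Finset.sum_congr rfl fun u _ => ?_
  rw [negMulLog]; ring

lemma aux_le {α β : Type*} [Fintype α] [Fintype β] (q : α → β → ℝ) (hq : ∀ w u, 0 ≤ q w u) :
    (∑ w, ∑ u, negMulLog (q w u)) + negMulLog (∑ w, ∑ u, q w u) ≤
    (∑ w, negMulLog (∑ u, q w u)) + (∑ u, negMulLog (∑ w, q w u)) := by
  have key := aux_expand q
  set d := ∑ w, ∑ u, q w u with hd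
  have hsum : ∑ w, ∑ u, (q w u - (∑ u, q w u) * (∑ w, q w u) / d) = 0 := by
    simp only [Finset.sum_sub_distrib, ← Finset.sum_div, ← Finset.mul_sum, ← Finset.sum_mul]
    rw [Finset.sum_comm (f := fun u w => q w u), ← hd]
    by_cases h0 : d = 0
    · simp [h0]
    · field_simp; ring
  have hle : ∑ w, ∑ u, (q w u - (∑ u, q w u) * (∑ w, q w u) / d) ≤
      ∑ w, ∑ u, q w u * (log (q w u) + log d - log (∑ u, q w u) - log (∑ w, q w u)) := by
    refine Finset.sum_le_sum fun w _ => Finset.sum_le_sum fun u _ => ?_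
    have hb : q w u ≤ ∑ u, q w u :=
      Finset.single_le_sum (f := fun u => q w u) (fun u _ => hq w u) (Finset.mem_univ u)
    have hc : q w u ≤ ∑ w, q w u :=
      Finset.single_le_sum (f := fun w => q w u) (fun w _ => hq w u) (Finset.mem_univ w)
    have hbd : (∑ u, q w u) ≤ d :=
      Finset.single_le_sum (f := fun w => ∑ u, q w u)
        (fun w _ => Finset.sum_nonneg fun u _ => hq w u) (Finset.mem_univ w)
    generalize (∑ u, q w u) = b at *
    generalize (∑ w, q w u) = c at *
    rcases (hq w u).eq_or_lt with h | h
    · rw [← h] at hb hc ⊢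
      have : 0 ≤ b * c / d := by
        have : 0 ≤ d := hb.trans hbd
        positivity
      simpa using this
    · generalize q w u = a at *
      have hb0 : 0 < b := by linarith
      have hc0 : 0 < c := by linarith
      have hd0 : 0 < d := by linarith
      have hl := Real.log_le_sub_one_of_pos (x := b * c / (a * d)) (by positivity)
      rw [Real.log_div (by positivity) (by positivity), Real.log_mul hb0.ne' hc0.ne',
        Real.log_mul h.ne' hd0.ne'] at hl
      have h2 := mul_le_mul_of_nonneg_left hl h.le
      have h3 : a * (b * c / (a * d) - 1) = b * c / d - a := by field_simp
      rw [h3] at h2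
      linarith
  linarith

lemma aux_eq {α β : Type*} [Fintype α] [Fintype β] (q : α → β → ℝ) (hq : ∀ w u, 0 ≤ q w u)
    (hi : ∀ w u, q w u * (∑ w, ∑ u, q w u) = (∑ u, q w u) * (∑ w, q w u)) :
    (∑ w, ∑ u, negMulLog (q w u)) + negMulLog (∑ w, ∑ u, q w u) =
    (∑ w, negMulLog (∑ u, q w u)) + (∑ u, negMulLog (∑ w, q w u)) := by
  have key := aux_expand q
  set d := ∑ w, ∑ u, q w u with hd
  have hz : ∑ w, ∑ u, q w u * (log (q w u) + log d - log (∑ u, q w u) - log (∑ w, q w u))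
      = 0 := by
    refine Finset.sum_eq_zero fun w _ => Finset.sum_eq_zero fun u _ => ?_
    have hb : q w u ≤ ∑ u, q w u :=
      Finset.single_le_sum (f := fun u => q w u) (fun u _ => hq w u) (Finset.mem_univ u)
    have hc : q w u ≤ ∑ w, q w u :=
      Finset.single_le_sum (f := fun w => q w u) (fun w _ => hq w u) (Finset.mem_univ w)
    have hbd : (∑ u, q w u) ≤ d :=
      Finset.single_le_sum (f := fun w => ∑ u, q w u)
        (fun w _ => Finset.sum_nonneg fun u _ => hq w u) (Finset.mem_univ w)
    have hh := hi w u
    generalize (∑ u, q w u) = b at *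
    generalize (∑ w, q w u) = c at *
    rcases (hq w u).eq_or_lt with h | h
    · rw [← h]; simp
    · generalize q w u = a at *
      have hb0 : 0 < b := by linarith
      have hc0 : 0 < c := by linarith
      have hd0 : 0 < d := by linarith
      have := congrArg Real.log hh
      rw [Real.log_mul hb0.ne' hc0.ne', Real.log_mul h.ne' hd0.ne'] at this
      rw [this]; ring
  linarith

lemma entropy_inj {Ω : Type*} [MeasureSpace Ω] {A A' : Type*} (X : Ω → A) (f : A → A')
    (hf : Function.Injective f) : shannonEntropy (fun ω => f (X ω)) = shannonEntropy X := by
  unfold shannonEntropy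
  rw [← hf.tsum_eq]
  · simp only [hf.eq_iff]
  · intro b hb
    by_contra hn
    apply hb
    have : {ω | f (X ω) = b} = ∅ := by
      ext ω; simp only [Set.mem_ofPred_eq, Set.mem_empty_iff_false, iff_false]
      rintro rfl; exact hn ⟨_, rfl⟩
    simp [this]

lemma meas_pair {Ω : Type*} [MeasurableSpace Ω] {P Q : Type*} (U : Ω → P) (V : Ω → Q)
    (hU : ∀ a, MeasurableSet {ω | U ω = a}) (hV : ∀ a, MeasurableSet {ω | V ω = a}) :
    ∀ a, MeasurableSet {ω | (U ω, V ω) = a} := by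
  rintro ⟨a, b⟩
  simp only [Prod.mk.injEq]
  exact (hU a).inter (hV b)

lemma marg {Ω : Type*} [MeasureSpace Ω] [IsProbabilityMeasure (ℙ : Measure Ω)]
    {A : Type*} [Fintype A] (X : Ω → A) (hX : ∀ a, MeasurableSet {ω | X ω = a})
    (s : Set Ω) (hs : MeasurableSet s) :
    (ℙ s).toReal = ∑ a, (ℙ {ω | X ω = a ∧ ω ∈ s}).toReal := by
  rw [← ENNReal.toReal_sum (fun _ _ => measure_ne_top _ _), ← measure_biUnion_finset]
  · congr 2
    ext ω; simp
  · intro a _ b _ hab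
    refine Set.disjoint_left.2 fun ω h1 h2 => hab (h1.1.symm.trans h2.1)
  · intro a _
    exact (hX a).inter hs

/-- joint mass -/
noncomputable def jm {Ω : Type*} [MeasureSpace Ω] {A B C : Type*}
    (X : Ω → A) (Y : Ω → B) (Z : Ω → C) (z : C) (x : A) (y : B) : ℝ := (ℙ {ω | X ω = x ∧ Y ω = y ∧ Z ω = z}).toReal

lemma jm_marg {Ω : Type*} [MeasureSpace Ω] [IsProbabilityMeasure (ℙ : Measure Ω)]
    {A B C : Type*} [Fintype A] [Fintype B] [Fintype C]
    (X : Ω → A) (Y : Ω → B) (Z : Ω → C)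
    (hX : ∀ a, MeasurableSet {ω | X ω = a})
    (hY : ∀ a, MeasurableSet {ω | Y ω = a})
    (hZ : ∀ a, MeasurableSet {ω | Z ω = a}) : (∀ z x, ∑ y, jm X Y Z z x y = (ℙ {ω | X ω = x ∧ Z ω = z}).toReal) ∧
    (∀ z y, ∑ x, jm X Y Z z x y = (ℙ {ω | Y ω = y ∧ Z ω = z}).toReal) ∧
    (∀ z, ∑ x, ∑ y, jm X Y Z z x y = (ℙ {ω | Z ω = z}).toReal) := by
  have h1 : ∀ z x, ∑ y, jm X Y Z z x y = (ℙ {ω | X ω = x ∧ Z ω = z}).toReal := by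
    intro z x
    rw [marg Y hY {ω | X ω = x ∧ Z ω = z} ((hX x).inter (hZ z))]
    refine Finset.sum_congr rfl fun y _ => ?_
    unfold jm
    congr 2; ext ω; simp only [Set.mem_ofPred_eq, Set.mem_inter_iff]; tauto
  refine ⟨h1, ?_, ?_⟩
  · intro z y
    rw [marg X hX {ω | Y ω = y ∧ Z ω = z} ((hY y).inter (hZ z))]
    rfl
  · intro z
    rw [marg X hX _ (hZ z)]
    simp only [h1]
    rfl

lemma entropy_exp {Ω : Type*} [MeasureSpace Ω] [IsProbabilityMeasure (ℙ : Measure Ω)]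
    {A B C : Type*} [Fintype A] [Fintype B] [Fintype C]
    (X : Ω → A) (Y : Ω → B) (Z : Ω → C)
    (hX : ∀ a, MeasurableSet {ω | X ω = a})
    (hY : ∀ a, MeasurableSet {ω | Y ω = a})
    (hZ : ∀ a, MeasurableSet {ω | Z ω = a}) :
    shannonEntropy (fun ω => (X ω, Y ω, Z ω)) = ∑ z, ∑ x, ∑ y, negMulLog (jm X Y Z z x y) ∧
    shannonEntropy (fun ω => (X ω, Z ω)) = ∑ z, ∑ x, negMulLog (∑ y, jm X Y Z z x y) ∧
    shannonEntropy (fun ω => (Y ω, Z ω)) = ∑ z, ∑ y, negMulLog (∑ x, jm X Y Z z x y) ∧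
    shannonEntropy Z = ∑ z, negMulLog (∑ x, ∑ y, jm X Y Z z x y) := by
  obtain ⟨h1, h2, h3⟩ := jm_marg X Y Z hX hY hZ
  simp only [h3]
  simp only [h1, h2]
  unfold shannonEntropy jm
  simp only [tsum_fintype, Fintype.sum_prod_type, Prod.mk.injEq]
  refine ⟨?_, Finset.sum_comm, Finset.sum_comm, trivial⟩
  conv_rhs => rw [Finset.sum_comm]
  refine Finset.sum_congr rfl fun x _ => ?_
  rw [Finset.sum_comm]

lemma entropy_submod {Ω : Type*} [MeasureSpace Ω] [IsProbabilityMeasure (ℙ : Measure Ω)]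
    {A B C : Type*} [Fintype A] [Fintype B] [Fintype C]
    (X : Ω → A) (Y : Ω → B) (Z : Ω → C)
    (hX : ∀ a, MeasurableSet {ω | X ω = a})
    (hY : ∀ a, MeasurableSet {ω | Y ω = a})
    (hZ : ∀ a, MeasurableSet {ω | Z ω = a}) :
    shannonEntropy (fun ω => (X ω, Y ω, Z ω)) + shannonEntropy Z ≤
    shannonEntropy (fun ω => (X ω, Z ω)) + shannonEntropy (fun ω => (Y ω, Z ω)) := by
  obtain ⟨h1, h2, h3, h4⟩ := entropy_exp X Y Z hX hY hZ
  rw [h1, h2, h3, h4, ← Finset.sum_add_distrib, ← Finset.sum_add_distrib]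
  exact Finset.sum_le_sum fun z _ => aux_le _ fun _ _ => ENNReal.toReal_nonneg

lemma entropy_mod {Ω : Type*} [MeasureSpace Ω] [IsProbabilityMeasure (ℙ : Measure Ω)]
    {A B C : Type*} [Fintype A] [Fintype B] [Fintype C]
    (X : Ω → A) (Y : Ω → B) (Z : Ω → C)
    (hX : ∀ a, MeasurableSet {ω | X ω = a})
    (hY : ∀ a, MeasurableSet {ω | Y ω = a})
    (hZ : ∀ a, MeasurableSet {ω | Z ω = a})
    (hi : ∀ x y z, ℙ {ω | X ω = x ∧ Y ω = y ∧ Z ω = z} * ℙ {ω | Z ω = z} =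
      ℙ {ω | X ω = x ∧ Z ω = z} * ℙ {ω | Y ω = y ∧ Z ω = z}) :
    shannonEntropy (fun ω => (X ω, Y ω, Z ω)) + shannonEntropy Z =
    shannonEntropy (fun ω => (X ω, Z ω)) + shannonEntropy (fun ω => (Y ω, Z ω)) := by
  obtain ⟨h1, h2, h3, h4⟩ := entropy_exp X Y Z hX hY hZ
  obtain ⟨m1, m2, m3⟩ := jm_marg X Y Z hX hY hZ
  rw [h1, h2, h3, h4, ← Finset.sum_add_distrib, ← Finset.sum_add_distrib]
  refine Finset.sum_congr rfl fun z _ => aux_eq _ (fun _ _ => ENNReal.toReal_nonneg) ?_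
  intro x y
  rw [m1, m2, m3]
  have := congrArg ENNReal.toReal (hi x y z)
  rwa [ENNReal.toReal_mul, ENNReal.toReal_mul] at this

end Helpers

/-- **Submodularity of the difficulty-aware information.**
Let `Y, D, X₁,…,X_m` be random variables with finite ranges such that for every subset
`S` the variables `(X_j)_{j∈S}` are conditionally independent given `(Y,D)`.  Then
`F(S) = I(Y; X_S | D)` is submodular: for all `S ⊆ T` and `j ∉ T`,
`F(S ∪ {j}) - F(S) ≥ F(T ∪ {j}) - F(T)`. -/
theorem difficulty_aware_submodular
    {Ω : Type*} [MeasureSpace Ω] [IsProbabilityMeasure (ℙ : Measure Ω)]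
    {m : ℕ} {B C : Type*} [Fintype B] [Fintype C]
    [MeasurableSpace B] [MeasurableSingletonClass B]
    [MeasurableSpace C] [MeasurableSingletonClass C]
    {A : Fin m → Type*} [∀ j, Fintype (A j)]
    [∀ j, MeasurableSpace (A j)] [∀ j, MeasurableSingletonClass (A j)]
    (Y : Ω → B) (D : Ω → C) (X : ∀ j, Ω → A j)
    (hYm : Measurable Y) (hDm : Measurable D) (hXm : ∀ j, Measurable (X j))
    (hci : ∀ (S : Finset (Fin m)) (x : ∀ i : {i : Fin m // i ∈ S}, A i.1) (y : B) (d : C),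
      ℙ ({ω | Y ω = y} ∩ {ω | D ω = d}) ≠ 0 →
      (ℙ[|{ω | Y ω = y} ∩ {ω | D ω = d}])
          {ω | ∀ i : {i : Fin m // i ∈ S}, X i.1 ω = x i}
        = ∏ i : {i : Fin m // i ∈ S},
            (ℙ[|{ω | Y ω = y} ∩ {ω | D ω = d}]) {ω | X i.1 ω = x i}) :
    ∀ (S T : Finset (Fin m)) (j : Fin m), S ⊆ T → j ∉ T →
      condMutualInfo Y (fun ω => fun i : {i : Fin m // i ∈ insert j T} => X i.1 ω) D
          - condMutualInfo Y (fun ω => fun i : {i : Fin m // i ∈ T} => X i.1 ω) D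
        ≤ condMutualInfo Y (fun ω => fun i : {i : Fin m // i ∈ insert j S} => X i.1 ω) D
          - condMutualInfo Y (fun ω => fun i : {i : Fin m // i ∈ S} => X i.1 ω) D := by
  classical
  have hYs : ∀ y, MeasurableSet {ω | Y ω = y} := fun y => hYm (measurableSet_singleton y)
  have hDs : ∀ d, MeasurableSet {ω | D ω = d} := fun d => hDm (measurableSet_singleton d)
  have hXs : ∀ j x, MeasurableSet {ω | X j ω = x} := fun j x => hXm j (measurableSet_singleton x)
  have hTs : ∀ (S : Finset (Fin m)) (x : ∀ i : {i : Fin m // i ∈ S}, A i.1),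
      MeasurableSet {ω | (fun i : {i : Fin m // i ∈ S} => X i.1 ω) = x} := by
    intro S x
    have : {ω | (fun i : {i : Fin m // i ∈ S} => X i.1 ω) = x} = ⋂ i, {ω | X i.1 ω = x i} := by
      ext ω; simp [funext_iff]
    rw [this]
    exact MeasurableSet.iInter fun i => hXs _ _
  -- splitting off the new index
  have split : ∀ (T : Finset (Fin m)) (j : Fin m),
      ∃ f : (∀ i : {i : Fin m // i ∈ insert j T}, A i.1) →
        A j × (∀ i : {i : Fin m // i ∈ T}, A i.1), Function.Injective f ∧
        ∀ ω, f (fun i : {i : Fin m // i ∈ insert j T} => X i.1 ω)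
          = (X j ω, fun i : {i : Fin m // i ∈ T} => X i.1 ω) := by
    intro T j
    refine ⟨fun x => (x ⟨j, Finset.mem_insert_self j T⟩,
      fun i => x ⟨i.1, Finset.mem_insert_of_mem i.2⟩), ?_, fun ω => rfl⟩
    intro x x' h
    simp only [Prod.mk.injEq, funext_iff] at h
    funext ⟨i, hi⟩
    rcases Finset.mem_insert.1 hi with rfl | hi'
    · exact h.1
    · exact h.2 ⟨i, hi'⟩
  have hg : ∀ (T : Finset (Fin m)) (j : Fin m), j ∉ T →
      shannonEntropy (fun ω => (Y ω, (fun i : {i : Fin m // i ∈ insert j T} => X i.1 ω), D ω))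
        - shannonEntropy (fun ω => (Y ω, (fun i : {i : Fin m // i ∈ T} => X i.1 ω), D ω))
      = shannonEntropy (fun ω => (X j ω, (Y ω, D ω))) - shannonEntropy (fun ω => (Y ω, D ω)) := by
    intro T j hj
    have hmod := entropy_mod (X j) (fun ω => fun i : {i : Fin m // i ∈ T} => X i.1 ω)
      (fun ω => (Y ω, D ω)) (hXs j) (hTs T) (meas_pair _ _ hYs hDs) (by
        rintro x t ⟨y, d⟩
        have hE : {ω | (Y ω, D ω) = (y, d)} = {ω | Y ω = y} ∩ {ω | D ω = d} := by
          ext ω; simp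
        have hEm : MeasurableSet ({ω | Y ω = y} ∩ {ω | D ω = d}) := (hYs y).inter (hDs d)
        have hc := fun S x => hci S x y d
        have e1 : ∀ P : Ω → Prop, {ω | P ω ∧ (Y ω, D ω) = (y, d)} =
            ({ω | Y ω = y} ∩ {ω | D ω = d}) ∩ {ω | P ω} := by
          intro P; rw [← hE]; ext ω; simp only [Set.mem_ofPred_eq, Set.mem_inter_iff]; tauto
        simp only [← and_assoc]
        rw [e1, e1, e1, hE]
        generalize ({ω | Y ω = y} ∩ {ω | D ω = d}) = E at *
        by_cases h0 : ℙ E = 0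
        · rw [h0, measure_mono_null Set.inter_subset_left h0,
            measure_mono_null Set.inter_subset_left h0]; simp
        · rw [← cond_mul_eq_inter hEm, ← cond_mul_eq_inter hEm, ← cond_mul_eq_inter hEm]
          let z : ∀ i : {i : Fin m // i ∈ insert j T}, A i.1 := fun i =>
            if h : i.1 = j then cast (congrArg A h.symm) x else t ⟨i.1, Finset.mem_of_mem_insert_of_ne i.2 h⟩
          have hzj : z ⟨j, Finset.mem_insert_self j T⟩ = x := by simp [z]
          have hzt : ∀ i : {i : Fin m // i ∈ T},
              z ⟨i.1, Finset.mem_insert_of_mem i.2⟩ = t i := by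
            intro i
            have : i.1 ≠ j := fun h => hj (h ▸ i.2)
            simp [z, this]
          have c1 := hc (insert j T) z h0
          have c2 := hc T t h0
          have s1 : {ω | X j ω = x ∧ (fun i : {i : Fin m // i ∈ T} => X i.1 ω) = t} =
              {ω | ∀ i : {i : Fin m // i ∈ insert j T}, X i.1 ω = z i} := by
            ext ω
            simp only [Set.mem_ofPred_eq, funext_iff]
            constructor
            · rintro ⟨h1, h2⟩ ⟨i, hi⟩
              rcases Finset.mem_insert.1 hi with rfl | hi'
              · exact h1.trans hzj.symm
              · exact (h2 ⟨i, hi'⟩).trans (hzt ⟨i, hi'⟩).symm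
            · intro h
              exact ⟨(h ⟨j, Finset.mem_insert_self j T⟩).trans hzj,
                fun i => (h ⟨i.1, Finset.mem_insert_of_mem i.2⟩).trans (hzt i)⟩
          have s2 : {ω | (fun i : {i : Fin m // i ∈ T} => X i.1 ω) = t} =
              {ω | ∀ i : {i : Fin m // i ∈ T}, X i.1 ω = t i} := by
            ext ω; simp [funext_iff]
          have hprod : ∏ i : {i : Fin m // i ∈ insert j T}, (ℙ[|E]) {ω | X i.1 ω = z i} =
              (ℙ[|E]) {ω | X j ω = x} *
                ∏ i : {i : Fin m // i ∈ T}, (ℙ[|E]) {ω | X i.1 ω = t i} := by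
            rw [Finset.univ_eq_attach, Finset.univ_eq_attach, Finset.attach_insert,
              Finset.prod_insert, hzj, Finset.prod_image]
            · simp only [hzt]
            · intro a _ b _ hab
              exact Subtype.ext (congrArg (fun k => k.1) hab)
            · simp only [Finset.mem_image, not_exists]
              rintro ⟨a, ha⟩ ⟨_, h⟩
              simp only [Subtype.mk.injEq] at h
              exact hj (h ▸ ha)
          rw [s1, s2, c1, c2, hprod]
          ring)
    obtain ⟨f, hf, hfX⟩ := split T j
    have a1 : shannonEntropy (fun ω => (Y ω, (fun i : {i : Fin m // i ∈ insert j T} => X i.1 ω), D ω))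
        = shannonEntropy (fun ω => (X j ω, (fun i : {i : Fin m // i ∈ T} => X i.1 ω), (Y ω, D ω))) := by
      rw [← entropy_inj (fun ω => (Y ω, (fun i : {i : Fin m // i ∈ insert j T} => X i.1 ω), D ω))
        (fun p => ((f p.2.1).1, (f p.2.1).2, (p.1, p.2.2)))]
      · simp only [hfX]
      · rintro ⟨a, b, c⟩ ⟨a', b', c'⟩ h
        simp only [Prod.mk.injEq] at h
        obtain ⟨h1, h2, h3, h4⟩ := h
        rw [hf (Prod.ext h1 h2), h3, h4]
    have a2 : shannonEntropy (fun ω => (Y ω, (fun i : {i : Fin m // i ∈ T} => X i.1 ω), D ω))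
        = shannonEntropy (fun ω => ((fun i : {i : Fin m // i ∈ T} => X i.1 ω), (Y ω, D ω))) := by
      rw [← entropy_inj (fun ω => (Y ω, (fun i : {i : Fin m // i ∈ T} => X i.1 ω), D ω))
        (fun p => (p.2.1, (p.1, p.2.2)))]
      rintro ⟨a, b, c⟩ ⟨a', b', c'⟩ h
      simp only [Prod.mk.injEq] at h ⊢
      tauto
    rw [a1, a2]
    linarith
  intro S T j hST hj
  have hgT := hg T j hj
  have hgS := hg S j (fun h => hj (hST h))
  have hsub := entropy_submod (X j) (fun ω => fun i : {i : Fin m // i ∈ T} => X i.1 ω)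
    (fun ω => ((fun i : {i : Fin m // i ∈ S} => X i.1 ω), D ω)) (hXs j) (hTs T)
    (meas_pair _ _ (hTs S) hDs)
  have b1 : shannonEntropy (fun ω => ((fun i : {i : Fin m // i ∈ insert j T} => X i.1 ω), D ω)) =
      shannonEntropy (fun ω => (X j ω, (fun i : {i : Fin m // i ∈ T} => X i.1 ω),
        ((fun i : {i : Fin m // i ∈ S} => X i.1 ω), D ω))) := by
    obtain ⟨f, hf, hfX⟩ := split T j
    rw [← entropy_inj (fun ω => ((fun i : {i : Fin m // i ∈ insert j T} => X i.1 ω), D ω))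
      (fun p => ((f p.1).1, (f p.1).2,
        ((fun i : {i : Fin m // i ∈ S} => (f p.1).2 ⟨i.1, hST i.2⟩), p.2)))]
    · simp only [hfX]
    · rintro ⟨a, b⟩ ⟨a', b'⟩ h
      simp only [Prod.mk.injEq] at h
      obtain ⟨h1, h2, _, h4⟩ := h
      rw [hf (Prod.ext h1 h2), h4]
  have b2 : shannonEntropy (fun ω => ((fun i : {i : Fin m // i ∈ insert j S} => X i.1 ω), D ω)) =
      shannonEntropy (fun ω => (X j ω, ((fun i : {i : Fin m // i ∈ S} => X i.1 ω), D ω))) := by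
    obtain ⟨f, hf, hfX⟩ := split S j
    rw [← entropy_inj (fun ω => ((fun i : {i : Fin m // i ∈ insert j S} => X i.1 ω), D ω))
      (fun p => ((f p.1).1, ((f p.1).2, p.2)))]
    · simp only [hfX]
    · rintro ⟨a, b⟩ ⟨a', b'⟩ h
      simp only [Prod.mk.injEq] at h
      obtain ⟨h1, h2, h4⟩ := h
      rw [hf (Prod.ext h1 h2), h4]
  have b3 : shannonEntropy (fun ω => ((fun i : {i : Fin m // i ∈ T} => X i.1 ω), D ω)) =
      shannonEntropy (fun ω => ((fun i : {i : Fin m // i ∈ T} => X i.1 ω),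
        ((fun i : {i : Fin m // i ∈ S} => X i.1 ω), D ω))) := by
    rw [← entropy_inj (fun ω => ((fun i : {i : Fin m // i ∈ T} => X i.1 ω), D ω))
      (fun p => (p.1, ((fun i : {i : Fin m // i ∈ S} => p.1 ⟨i.1, hST i.2⟩), p.2)))]
    rintro ⟨a, b⟩ ⟨a', b'⟩ h
    simp only [Prod.mk.injEq] at h ⊢
    tauto
  unfold condMutualInfo
  linarith
end
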